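/- arXiv:2409.05539 — 3 statements merged into one kernel-verified Lean document; each statement's English description precedes it below -/
import Mathlib

section
/- Let u, v be vectors in a real inner product space and let M ∈ (0, 1). If ‖u − v‖^2 ≤ M^2·‖u + v‖^2, then ⟨u, v⟩ ≥ ((1 − M^2)/(2·(1 + M^2)))·(‖u‖^2 + ‖v‖^2); in particular ⟨u, v⟩ ≥ 0. -/
open scoped RealInnerProductSpace

/-- If `‖u − v‖² ≤ M²·‖u + v‖²` with `M ∈ (0,1)`, then
`⟪u, v⟫ ≥ ((1 − M²)/(2(1 + M²)))·(‖u‖² + ‖v‖²) ≥ 0`. -/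
theorem aligned_gradients_nonneg_inner
    {E : Type*} [NormedAddCommGroup E] [InnerProductSpace ℝ E]
    (u v : E) (M : ℝ) (hM : M ∈ Set.Ioo (0 : ℝ) 1)
    (h : ‖u - v‖ ^ 2 ≤ M ^ 2 * ‖u + v‖ ^ 2) :
    ((1 - M ^ 2) / (2 * (1 + M ^ 2))) * (‖u‖ ^ 2 + ‖v‖ ^ 2) ≤ ⟪u, v⟫ ∧
      (0 : ℝ) ≤ ⟪u, v⟫ := by
  obtain ⟨h0, h1⟩ := hM
  have hM2 : 0 ≤ 1 - M ^ 2 := by nlinarith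
  -- Expanding both squares and collecting the inner product gives
  -- `(1 - M²)(‖u‖² + ‖v‖²) ≤ 2(1 + M²)⟪u, v⟫`.
  rw [norm_sub_sq_real, norm_add_sq_real] at h
  have key : ((1 - M ^ 2) / (2 * (1 + M ^ 2))) * (‖u‖ ^ 2 + ‖v‖ ^ 2) ≤ ⟪u, v⟫ := by
    rw [div_mul_eq_mul_div, div_le_iff₀ (by positivity)]
    linarith
  exact ⟨key, le_trans (by positivity) key⟩
end

section
/- Let E be a real inner product space, let f : E → ℝ be differentiable with L-Lipschitz gradient, and let 0 < η ≤ 1/(2L). Then for all z, z' ∈ E, f(z') ≤ f(z) + (η/2)·‖(z' − z)/η + ∇f(z)‖^2 − (η/4)·‖(z' − z)/η‖^2 − (η/2)·‖∇f(z)‖^2. In particular, ‖∇f(z)‖^2 ≤ (2/η)·( f(z) − f(z') ) + ‖(z' − z)/η + ∇f(z)‖^2. -/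
/-!
Write `d = z' - z`. The descent lemma `f z' ≤ f z + ⟪∇f z, d⟫ + (L/2)‖d‖²` holds because
`t ↦ f (z + t d) - t ⟪∇f z, d⟫ - (L/2) t² ‖d‖²` has nonpositive derivative for `t ≥ 0`, by
Cauchy–Schwarz and the Lipschitz bound. Since `L/2 ≤ 1/(4η)`, the quadratic term is at most
`(η/4)‖d/η‖²`, and expanding `‖d/η + ∇f z‖²` turns the inner product into the three squared norms.
-/

lemma descent_lemma {E : Type*} [NormedAddCommGroup E] [InnerProductSpace ℝ E] [CompleteSpace E]
    (f : E → ℝ) (f' : E → E) (L : ℝ)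
    (hgrad : ∀ x : E, HasGradientAt f (f' x) x)
    (hlip : ∀ x y : E, ‖f' x - f' y‖ ≤ L * ‖x - y‖) (z d : E) :
    f (z + d) ≤ f z + inner ℝ (f' z) d + L / 2 * ‖d‖ ^ 2 := by
  have hder : ∀ t : ℝ, HasDerivAt
      (fun t : ℝ => f (z + t • d) - t * inner ℝ (f' z) d - L / 2 * ‖d‖ ^ 2 * t ^ 2)
      (inner ℝ (f' (z + t • d)) d - inner ℝ (f' z) d - L * ‖d‖ ^ 2 * t) t := by
    intro t
    have hline : HasDerivAt (fun t : ℝ => z + t • d) d t := by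
      simpa using ((hasDerivAt_id t).smul_const d).const_add z
    have hf := (hgrad (z + t • d)).hasFDerivAt.comp_hasDerivAt t hline
    have hlin := (hasDerivAt_id t).mul_const (inner ℝ (f' z) d)
    have hsq := ((hasDerivAt_id t).pow 2).const_mul (L / 2 * ‖d‖ ^ 2)
    refine ((hf.sub hlin).sub hsq).congr_deriv ?_
    simp
    ring
  have hanti := antitoneOn_of_deriv_nonpos (convex_Icc (0 : ℝ) 1)
    (fun t _ => (hder t).continuousAt.continuousWithinAt)
    (fun t _ => (hder t).differentiableAt.differentiableWithinAt)
    (by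
      intro t ht
      rw [interior_Icc] at ht
      rw [(hder t).deriv, ← inner_sub_left]
      have hcs := real_inner_le_norm (f' (z + t • d) - f' z) d
      have hl := hlip (z + t • d) z
      rw [add_sub_cancel_left, norm_smul, Real.norm_of_nonneg ht.1.le] at hl
      nlinarith [mul_le_mul_of_nonneg_right hl (norm_nonneg d)])
  have h01 := hanti (Set.left_mem_Icc.2 zero_le_one) (Set.right_mem_Icc.2 zero_le_one) zero_le_one
  simp at h01
  linarith

/-- Three-term splitting of the descent inequality: if `f` is `L`-smooth
(with gradient `f'`) and `0 < η ≤ 1/(2L)`, then for all `z, z'`,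
`f(z') ≤ f(z) + (η/2)‖(z'−z)/η + ∇f(z)‖² − (η/4)‖(z'−z)/η‖² − (η/2)‖∇f(z)‖²`;
in particular `‖∇f(z)‖² ≤ (2/η)(f(z) − f(z')) + ‖(z'−z)/η + ∇f(z)‖²`. -/
theorem descent_inequality_split
    {E : Type*} [NormedAddCommGroup E] [InnerProductSpace ℝ E] [CompleteSpace E]
    (f : E → ℝ) (f' : E → E) (L η : ℝ) (hL : 0 < L)
    (hgrad : ∀ x : E, HasGradientAt f (f' x) x)
    (hlip : ∀ x y : E, ‖f' x - f' y‖ ≤ L * ‖x - y‖)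
    (hη : 0 < η) (hη2 : η ≤ 1 / (2 * L)) :
    ∀ z z' : E,
      (f z' ≤ f z + (η / 2) * ‖η⁻¹ • (z' - z) + f' z‖ ^ 2
          - (η / 4) * ‖η⁻¹ • (z' - z)‖ ^ 2 - (η / 2) * ‖f' z‖ ^ 2) ∧
      (‖f' z‖ ^ 2 ≤ (2 / η) * (f z - f z') + ‖η⁻¹ • (z' - z) + f' z‖ ^ 2) := by
  intro z z'
  have hdesc := descent_lemma f f' L hgrad hlip z (z' - z)
  rw [add_sub_cancel] at hdesc
  -- In terms of `u = (z' - z) / η` every quantity is polynomial in `η`.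
  obtain ⟨u, hu⟩ : ∃ u : E, u = η⁻¹ • (z' - z) := ⟨_, rfl⟩
  have hd : z' - z = η • u := by rw [hu, smul_inv_smul₀ hη.ne']
  rw [← hu]
  rw [hd, inner_smul_right, norm_smul, Real.norm_of_nonneg hη.le, real_inner_comm] at hdesc
  have hexp := norm_add_sq_real u (f' z)
  have hLη : η * (2 * L) ≤ 1 := (le_div_iff₀ (by positivity)).1 hη2
  have hquad : L / 2 * (η * ‖u‖) ^ 2 ≤ η / 4 * ‖u‖ ^ 2 := by
    have := mul_le_mul_of_nonneg_right hLη (by positivity : 0 ≤ η / 4 * ‖u‖ ^ 2)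
    linarith
  have hmain : f z' ≤ f z + (η / 2) * ‖u + f' z‖ ^ 2
      - (η / 4) * ‖u‖ ^ 2 - (η / 2) * ‖f' z‖ ^ 2 := by
    rw [hexp]
    linarith
  refine ⟨hmain, ?_⟩
  have hnn : 0 ≤ η / 4 * ‖u‖ ^ 2 := by positivity
  have hscaled : (η / 2) * (‖f' z‖ ^ 2 - ‖u + f' z‖ ^ 2) ≤ f z - f z' := by linarith
  have hdiv := mul_le_mul_of_nonneg_left hscaled (by positivity : 0 ≤ 2 / η)
  have hone : 2 / η * (η / 2) = 1 := by field_simp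
  rw [← mul_assoc, hone, one_mul] at hdiv
  linarith
end

section
/- (Deterministic one-step gradient-norm inequality.) Let E be a real inner product space, and let f_1, …, f_n : E → ℝ each be differentiable with L-Lipschitz gradient. Let C ⊆ {1, …, n} be a cluster of size c, with reference weights w_{ik}^⋆ = 1 if both i, k ∈ C and w_{ik}^⋆ = 0 otherwise. Fix points x_1, …, x_n ∈ E, weights w_{ik} ∈ [0, 1], ρ > 0, and a step size 0 < η ≤ 1/(2L). Define the deterministic update x_i' = x_i − η·( ∇f_i(x_i) + ρ·Σ_{k=1}^n w_{ik}·(x_i − x_k) ) for each i, and for i, j ∈ C set z_{ij} = (x_i + x_j)/2, z_{ij}' = (x_i' + x_j')/2, f̃_{ij} = (f_i + f_j)/2. Then for all i, j ∈ C: ‖∇f̃_{ij}(z_{ij})‖^2 ≤ (2/η)·( f̃_{ij}(z_{ij}) − f̃_{ij}(z_{ij}') ) + (3·L^2/4)·‖x_i − x_j‖^2 + (3·c·ρ^2/2)·( Σ_{k=1}^n w_{ik}^⋆·‖x_i − x_k‖^2 + Σ_{k=1}^n w_{jk}^⋆·‖x_j − x_k‖^2 ) + (3·n·ρ^2/2)·(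 Σ_{k=1}^n |w_{ik} − w_{ik}^⋆|^2·‖x_i − x_k‖^2 + Σ_{k=1}^n |w_{jk} − w_{jk}^⋆|^2·‖x_j − x_k‖^2 ). -/
/-!
Write `g` for the average of the two update directions, so that `z' = z - η g`, and `G` for the
gradient of the averaged objective at the midpoint `z`. The descent lemma
(`cobo_descent_lemma`) and the polarization identity
`-2⟪G, g⟫ = ‖G - g‖² - ‖G‖² - ‖g‖²` give
`‖G‖² ≤ (2/η) (f̃ z - f̃ z') + ‖G - g‖² - (1 - Lη) ‖g‖²`, whose last term is nonpositive.
The error `G - g` splits into three parts: the gradient variation between `z` and `xᵢ, xⱼ`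
(bounded by smoothness, since `‖z - xᵢ‖ = ‖xᵢ - xⱼ‖ / 2`), the penalty with the reference
weights, a sum of at most `c` nonzero terms, and the penalty with the weight errors, a sum of
`n` terms. Cauchy–Schwarz on each part, and on the three parts together, gives the constants.
-/

/-- The descent lemma for a function with `L`-Lipschitz gradient. -/
lemma cobo_descent_lemma {E : Type*} [NormedAddCommGroup E] [InnerProductSpace ℝ E]
    [CompleteSpace E] (f : E → ℝ) (f' : E → E) (L : ℝ)
    (hgrad : ∀ x, HasGradientAt f (f' x) x)
    (hlip : ∀ x y, ‖f' x - f' y‖ ≤ L * ‖x - y‖) (x v : E) :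
    f (x + v) ≤ f x + inner ℝ (f' x) v + L / 2 * ‖v‖ ^ 2 := by
  -- The gap `f (x + t v)` minus its quadratic upper model is antitone in `t` on `[0, 1]`.
  have hd : ∀ t : ℝ, HasDerivAt
      (fun t : ℝ => f (x + t • v) - (t * inner ℝ (f' x) v + L / 2 * ‖v‖ ^ 2 * t ^ 2))
      (inner ℝ (f' (x + t • v)) v - (inner ℝ (f' x) v + L * ‖v‖ ^ 2 * t)) t := by
    intro t
    have h1 : HasDerivAt (fun t : ℝ => x + t • v) v t := by
      simpa using ((hasDerivAt_id t).smul_const v).const_add x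
    have h2 := (hgrad (x + t • v)).hasFDerivAt.comp_hasDerivAt t h1
    have h3 : HasDerivAt (fun t : ℝ => t * inner ℝ (f' x) v + L / 2 * ‖v‖ ^ 2 * t ^ 2)
        (inner ℝ (f' x) v + L * ‖v‖ ^ 2 * t) t := by
      have := ((hasDerivAt_id t).mul_const (inner ℝ (f' x) v)).add
        (((hasDerivAt_id t).pow 2).const_mul (L / 2 * ‖v‖ ^ 2))
      refine this.congr_deriv ?_
      simp
      ring
    have h4 : HasDerivAt (fun t : ℝ => f (x + t • v)) (inner ℝ (f' (x + t • v)) v) t := by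
      simpa [Function.comp_def] using h2
    exact h4.sub h3
  have hanti := antitoneOn_of_deriv_nonpos (convex_Icc (0 : ℝ) 1)
    (fun t _ => (hd t).continuousAt.continuousWithinAt)
    (fun t _ => (hd t).differentiableAt.differentiableWithinAt)
    (fun t ht => by
      rw [interior_Icc] at ht
      rw [(hd t).deriv]
      have h1 : inner ℝ (f' (x + t • v)) v - inner ℝ (f' x) v
          ≤ ‖f' (x + t • v) - f' x‖ * ‖v‖ := by
        rw [← inner_sub_left]
        exact real_inner_le_norm _ _
      have h2 : ‖f' (x + t • v) - f' x‖ ≤ L * (t * ‖v‖) := by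
        simpa [norm_smul, abs_of_pos ht.1] using hlip (x + t • v) x
      nlinarith [mul_le_mul_of_nonneg_right h2 (norm_nonneg v)])
  have h := hanti (Set.left_mem_Icc.2 zero_le_one) (Set.right_mem_Icc.2 zero_le_one) zero_le_one
  simp at h
  linarith

/-- Cauchy–Schwarz for the norm of a finite sum of vectors. -/
lemma cobo_norm_sum_sq_le {E ι : Type*} [NormedAddCommGroup E] (s : Finset ι) (v : ι → E) :
    ‖∑ k ∈ s, v k‖ ^ 2 ≤ s.card * ∑ k ∈ s, ‖v k‖ ^ 2 :=
  (pow_le_pow_left₀ (norm_nonneg _) (norm_sum_le s v) 2).trans sq_sum_le_card_mul_sum_sq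

lemma cobo_norm_add_sq_le {E : Type*} [NormedAddCommGroup E] (a b : E) :
    ‖a + b‖ ^ 2 ≤ 2 * (‖a‖ ^ 2 + ‖b‖ ^ 2) := by
  simpa using cobo_norm_sum_sq_le Finset.univ ![a, b]

lemma cobo_norm_add_three_sq_le {E : Type*} [NormedAddCommGroup E] (a b d : E) :
    ‖a + b + d‖ ^ 2 ≤ 3 * (‖a‖ ^ 2 + ‖b‖ ^ 2 + ‖d‖ ^ 2) := by
  simpa [Fin.sum_univ_three] using cobo_norm_sum_sq_le Finset.univ ![a, b, d]

/-- The penalty with the reference weights: only the `C.card` indices of `C` contribute. -/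
lemma cobo_ref_penalty_sq_le {E : Type*} [NormedAddCommGroup E] [InnerProductSpace ℝ E]
    {n : ℕ} (C : Finset (Fin n)) (x : Fin n → E) (i : Fin n) (hi : i ∈ C) :
    ‖∑ k, (if i ∈ C ∧ k ∈ C then (1 : ℝ) else 0) • (x i - x k)‖ ^ 2
      ≤ C.card * ∑ k, (if i ∈ C ∧ k ∈ C then (1 : ℝ) else 0) * ‖x i - x k‖ ^ 2 := by
  simpa [hi, ite_smul, ite_mul, Finset.sum_ite_mem] using
    cobo_norm_sum_sq_le C (fun k => x i - x k)

/-- The penalty with the weight errors. -/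
lemma cobo_err_penalty_sq_le {E : Type*} [NormedAddCommGroup E] [InnerProductSpace ℝ E]
    {n : ℕ} (d : Fin n → ℝ) (v : Fin n → E) :
    ‖∑ k, d k • v k‖ ^ 2 ≤ n * ∑ k, |d k| ^ 2 * ‖v k‖ ^ 2 := by
  simpa [norm_smul, mul_pow] using cobo_norm_sum_sq_le Finset.univ (fun k => d k • v k)

/-- Deterministic one-step gradient-norm inequality for the
full-gradient CoBo model update `xᵢ' = xᵢ − η(∇fᵢ(xᵢ) + ρ·Σₖ w_{ik}(xᵢ − xₖ))`:
for `i, j` in a cluster `C` of size `c`, with `z_{ij} = (xᵢ + xⱼ)/2`,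
`z_{ij}' = (xᵢ' + xⱼ')/2`, `f̃_{ij} = (fᵢ + fⱼ)/2` (whose gradient at `z` is
`(1/2)(∇fᵢ(z) + ∇fⱼ(z))`), `L`-smooth losses and `0 < η ≤ 1/(2L)`. -/
theorem cobo_deterministic_one_step_gradient
    {E : Type*} [NormedAddCommGroup E] [InnerProductSpace ℝ E] [CompleteSpace E]
    {n : ℕ} (f : Fin n → E → ℝ) (f' : Fin n → E → E) (L : ℝ) (hL : 0 < L)
    (hgrad : ∀ i (x : E), HasGradientAt (f i) (f' i x) x)
    (hlip : ∀ i (x y : E), ‖f' i x - f' i y‖ ≤ L * ‖x - y‖)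
    (C : Finset (Fin n)) (c : ℕ) (hc : c = C.card)
    (x : Fin n → E) (w : Fin n → Fin n → ℝ)
    (hw : ∀ i k, w i k ∈ Set.Icc (0 : ℝ) 1)
    (ρ η : ℝ) (hρ : 0 < ρ) (hη : 0 < η) (hstep : η ≤ 1 / (2 * L))
    -- the updated iterates
    (x' : Fin n → E)
    (hupd : ∀ i, x' i = x i - η • (f' i (x i) + ρ • ∑ k, w i k • (x i - x k))) :
    ∀ i ∈ C, ∀ j ∈ C,
      ‖((1 : ℝ) / 2) • (f' i (((1 : ℝ) / 2) • (x i + x j))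
          + f' j (((1 : ℝ) / 2) • (x i + x j)))‖ ^ 2
        ≤ (2 / η) * ((f i (((1 : ℝ) / 2) • (x i + x j))
                + f j (((1 : ℝ) / 2) • (x i + x j))) / 2
              - (f i (((1 : ℝ) / 2) • (x' i + x' j))
                + f j (((1 : ℝ) / 2) • (x' i + x' j))) / 2)
          + (3 * L ^ 2 / 4) * ‖x i - x j‖ ^ 2
          + (3 * c * ρ ^ 2 / 2) *
              ((∑ k, (if i ∈ C ∧ k ∈ C then (1 : ℝ) else 0) * ‖x i - x k‖ ^ 2)
                + ∑ k, (if j ∈ C ∧ k ∈ C then (1 : ℝ) else 0) * ‖x j - x k‖ ^ 2)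
          + (3 * n * ρ ^ 2 / 2) *
              ((∑ k, |w i k - (if i ∈ C ∧ k ∈ C then (1 : ℝ) else 0)| ^ 2 * ‖x i - x k‖ ^ 2)
                + ∑ k, |w j k - (if j ∈ C ∧ k ∈ C then (1 : ℝ) else 0)| ^ 2 * ‖x j - x k‖ ^ 2) := by
  intro i hi j hj
  set z : E := ((1 : ℝ) / 2) • (x i + x j) with hz
  set R : Fin n → E := fun l => ∑ k, (if l ∈ C ∧ k ∈ C then (1 : ℝ) else 0) • (x l - x k) with hR
  set D : Fin n → E :=
    fun l => ∑ k, (w l k - (if l ∈ C ∧ k ∈ C then (1 : ℝ) else 0)) • (x l - x k) with hD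
  have hS : ∀ l, ∑ k, w l k • (x l - x k) = R l + D l := by
    intro l
    simp only [hR, hD, ← Finset.sum_add_distrib, ← add_smul]
    refine Finset.sum_congr rfl fun k _ => ?_
    congr 1
    ring
  set g : E := ((1 : ℝ) / 2) • ((f' i (x i) + ρ • (R i + D i)) + (f' j (x j) + ρ • (R j + D j)))
    with hg
  set G : E := ((1 : ℝ) / 2) • (f' i z + f' j z) with hG
  have hz' : ((1 : ℝ) / 2) • (x' i + x' j) = z + (-η) • g := by
    rw [hupd i, hupd j, hS, hS, hz, hg]
    module
  rw [hz']
  have hdi := cobo_descent_lemma (f i) (f' i) L (hgrad i) (hlip i) z ((-η) • g)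
  have hdj := cobo_descent_lemma (f j) (f' j) L (hgrad j) (hlip j) z ((-η) • g)
  have hnorm : ‖(-η) • g‖ ^ 2 = η ^ 2 * ‖g‖ ^ 2 := by
    rw [norm_smul, mul_pow, Real.norm_eq_abs, sq_abs, neg_sq]
  rw [inner_smul_right, hnorm] at hdi hdj
  have hGg : inner ℝ G g = (inner ℝ (f' i z) g + inner ℝ (f' j z) g) / 2 := by
    rw [hG, real_inner_smul_left, inner_add_left]
    ring
  have hpol := norm_sub_sq_real G g
  have hLη : L * η ≤ 1 := by
    have := (le_div_iff₀ (by positivity : (0 : ℝ) < 2 * L)).1 hstep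
    nlinarith [mul_pos hL hη]
  have hmain : ‖G‖ ^ 2 ≤ (2 / η) * ((f i z + f j z) / 2
      - (f i (z + (-η) • g) + f j (z + (-η) • g)) / 2) + ‖G - g‖ ^ 2 := by
    rw [← sub_le_iff_le_add, div_mul_eq_mul_div, le_div_iff₀ hη]
    have h1 : 0 ≤ η * ((1 - L * η) * ‖g‖ ^ 2) :=
      mul_nonneg hη.le (mul_nonneg (by linarith) (sq_nonneg _))
    rw [hpol, hGg]
    nlinarith
  -- The three parts of the error `G - g`.
  have hsplit : G - g = ((1 : ℝ) / 2) • ((f' i z - f' i (x i)) + (f' j z - f' j (x j)))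
      + (-ρ / 2) • (R i + R j) + (-ρ / 2) • (D i + D j) := by
    rw [hG, hg]
    module
  have hsq : ∀ (a : ℝ) (v : E), ‖a • v‖ ^ 2 = a ^ 2 * ‖v‖ ^ 2 := by
    intro a v
    rw [norm_smul, mul_pow, Real.norm_eq_abs, sq_abs]
  have h3 := cobo_norm_add_three_sq_le
    (((1 : ℝ) / 2) • ((f' i z - f' i (x i)) + (f' j z - f' j (x j))))
    ((-ρ / 2) • (R i + R j)) ((-ρ / 2) • (D i + D j))
  rw [← hsplit, hsq, hsq, hsq] at h3
  have hzi : ‖z - x i‖ = ‖x i - x j‖ / 2 := by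
    rw [show z - x i = ((-1 : ℝ) / 2) • (x i - x j) by rw [hz]; module, norm_smul]
    norm_num
    ring
  have hzj : ‖z - x j‖ = ‖x i - x j‖ / 2 := by
    rw [show z - x j = ((1 : ℝ) / 2) • (x i - x j) by rw [hz]; module, norm_smul]
    norm_num
    ring
  have hA : ‖(f' i z - f' i (x i)) + (f' j z - f' j (x j))‖ ^ 2 ≤ L ^ 2 * ‖x i - x j‖ ^ 2 := by
    have h1 := hlip i z (x i)
    have h2 := hlip j z (x j)
    rw [hzi] at h1
    rw [hzj] at h2
    rw [← mul_pow]
    exact pow_le_pow_left₀ (norm_nonneg _) ((norm_add_le _ _).trans (by linarith)) 2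
  have hRi := cobo_ref_penalty_sq_le C x i hi
  have hRj := cobo_ref_penalty_sq_le C x j hj
  have hDi := cobo_err_penalty_sq_le
    (fun k => w i k - (if i ∈ C ∧ k ∈ C then (1 : ℝ) else 0)) (fun k => x i - x k)
  have hDj := cobo_err_penalty_sq_le
    (fun k => w j k - (if j ∈ C ∧ k ∈ C then (1 : ℝ) else 0)) (fun k => x j - x k)
  rw [← hc] at hRi hRj
  have hB := (cobo_norm_add_sq_le (R i) (R j)).trans
    (mul_le_mul_of_nonneg_left (add_le_add hRi hRj) zero_le_two)
  have hE := (cobo_norm_add_sq_le (D i) (D j)).trans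
    (mul_le_mul_of_nonneg_left (add_le_add hDi hDj) zero_le_two)
  have hB' := mul_le_mul_of_nonneg_left hB (sq_nonneg (-ρ / 2))
  have hE' := mul_le_mul_of_nonneg_left hE (sq_nonneg (-ρ / 2))
  linarith
end
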